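/- Let b ∈ F_{q^m}^n be a nonzero vector, let ⟨b⟩ ⊆ F_{q^m}^n be the one-dimensional F_{q^m}-subspace spanned by b, and let ⟨b⟩* = Σ_{i=0}^{m−1} ⟨b⟩^{q^i}. Then dim ⟨b⟩* = d_R(b,0), i.e., the F_{q^m}-dimension of ⟨b⟩* equals the rank weight of b. -/

import Mathlib

open scoped BigOperators

noncomputable section

variable (q : ℕ) (Fq : Type*) {Fqm : Type*} [Field Fq] [Field Fqm] [Algebra Fq Fqm]

/-- `V = V^q`: the image of `V` under the coordinatewise `q`-th power map equals `V`
(membership in the family `Γ(F_{q^m}^n)`). -/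
def IsGalClosed {n : ℕ} (V : Submodule Fqm (Fin n → Fqm)) : Prop :=
  (fun v : Fin n → Fqm => fun i => v i ^ q) '' (V : Set (Fin n → Fqm)) =
    (V : Set (Fin n → Fqm))

/-- The `i`-th relative dimension/intersection profile (RDIP) of `C1` and `C2`. -/
noncomputable def RDIP {n : ℕ} (C1 C2 : Submodule Fqm (Fin n → Fqm)) (i : ℕ) : ℕ :=
  sSup {d : ℕ | ∃ V : Submodule Fqm (Fin n → Fqm), IsGalClosed q V ∧
    Module.finrank Fqm ↥V = i ∧
    d = Module.finrank Fqm ↥(C1 ⊓ V) - Module.finrank Fqm ↥(C2 ⊓ V)}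

/-- The `i`-th relative generalized rank weight (RGRW) of `C1` and `C2`. -/
noncomputable def RGRW {n : ℕ} (C1 C2 : Submodule Fqm (Fin n → Fqm)) (i : ℕ) : ℕ :=
  sInf {d : ℕ | ∃ V : Submodule Fqm (Fin n → Fqm), IsGalClosed q V ∧
    d = Module.finrank Fqm ↥V ∧
    i ≤ Module.finrank Fqm ↥(C1 ⊓ V) - Module.finrank Fqm ↥(C2 ⊓ V)}

/-- The rank weight `d_R(x,0)` of a vector: the `F_q`-dimension of the `F_q`-span of
its coordinates. -/
noncomputable def rankWeight {ι : Type*} (x : ι → Fqm) : ℕ :=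
  Module.finrank Fq ↥(Submodule.span Fq (Set.range x))

/-- The minimum rank distance of a (nonzero) linear code. -/
noncomputable def minRankDist {ι : Type*} (C : Submodule Fqm (ι → Fqm)) : ℕ :=
  sInf {d : ℕ | ∃ x, x ∈ C ∧ x ≠ 0 ∧ d = rankWeight Fq x}

/-- The dual code with respect to the standard bilinear form `⟨x,y⟩ = ∑ i, x i * y i`. -/
def dualCode {n : ℕ} (V : Submodule Fqm (Fin n → Fqm)) : Submodule Fqm (Fin n → Fqm) where
  carrier := {x | ∀ v ∈ V, ∑ i, x i * v i = 0}
  add_mem' := by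
    intro a b ha hb v hv
    have h1 := ha v hv
    have h2 := hb v hv
    simp only [Set.mem_setOf_eq] at *
    simp only [Pi.add_apply, add_mul]
    rw [Finset.sum_add_distrib, h1, h2, add_zero]
  zero_mem' := by
    intro v hv
    simp
  smul_mem' := by
    intro c x hx v hv
    have h := hx v hv
    simp only [Set.mem_setOf_eq] at *
    simp only [Pi.smul_apply, smul_eq_mul, mul_assoc]
    rw [← Finset.mul_sum, h, mul_zero]


/-- `V* = Σ_{k=0}^{m-1} V^{q^k}`: the sum of the subspaces obtained from `V` by the
iterated coordinatewise `q`-power maps. -/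
noncomputable def qStar (m : ℕ) {n : ℕ} (V : Submodule Fqm (Fin n → Fqm)) :
    Submodule Fqm (Fin n → Fqm) :=
  ⨆ k ∈ Finset.range m, Submodule.span Fqm
    ((fun v : Fin n → Fqm => fun i => v i ^ q ^ k) '' (V : Set (Fin n → Fqm)))

/-! A tuple `b` of elements of `L` gives an `L`-linear evaluation map `f ↦ (f (b i))ᵢ` on
`Hom_K(L, L)`. Its image depends only on the restrictions of the `f` to the `K`-span of `b`, on
which it is injective, so its dimension is that of `Hom_K(span b, L)`, the rank weight of `b`.
When `L / K` is finite Galois, Dedekind independence makes the automorphisms an `L`-basis of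
`Hom_K(L, L)`, so the same image is spanned by the conjugates of `b`. Over a finite field these
are the Frobenius powers of `b`, which span `⟨b⟩*`. -/

open Module Submodule

section Evaluation

variable {ι K M : Type*} (L : Type*)

/-- Evaluation of `K`-linear maps `M → L` at the members of a family `b` in `M`. It is linear over
`L`, which acts on `M →ₗ[K] L` through the values. -/
def evalFamily [CommSemiring K] [AddCommMonoid M] [Module K M] [CommSemiring L] [Algebra K L]
    (b : ι → M) : (M →ₗ[K] L) →ₗ[L] (ι → L) :=
  LinearMap.funLeft L L b ∘ₗ LinearMap.ltoFun K M L L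

theorem evalFamily_injective [CommSemiring K] [AddCommMonoid M] [Module K M] [CommSemiring L]
    [Algebra K L] {b : ι → M} (hb : span K (Set.range b) = ⊤) :
    Function.Injective (evalFamily (K := K) L b) :=
  fun _ _ h ↦ LinearMap.ext_on_range hb (congrFun h)

theorem range_evalFamily_coe [Field K] [AddCommGroup M] [Module K M] [CommRing L] [Algebra K L]
    {p : Submodule K M} (b : ι → p) :
    (evalFamily (K := K) L fun i ↦ (b i : M)).range = (evalFamily (K := K) L b).range := by
  apply le_antisymm
  · rintro _ ⟨f, rfl⟩
    exact ⟨f.domRestrict p, rfl⟩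
  · rintro _ ⟨f, rfl⟩
    obtain ⟨g, rfl⟩ := LinearMap.exists_extend f
    exact ⟨g, rfl⟩

theorem finrank_range_evalFamily [Field K] [AddCommGroup M] [Module K M] [CommRing L]
    [Nontrivial L] [Algebra K L] (b : ι → M) [FiniteDimensional K (span K (Set.range b))] :
    finrank L (evalFamily (K := K) L b).range = finrank K (span K (Set.range b)) := by
  have hmem (i : ι) : b i ∈ span K (Set.range b) := subset_span (Set.mem_range_self i)
  have hspan : span K (Set.range fun i ↦ (⟨b i, hmem i⟩ : span K (Set.range b))) = ⊤ :=
    (span_range_subtype_eq_top_iff _ hmem).2 rfl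
  calc
    finrank L (evalFamily (K := K) L b).range
        = finrank L (evalFamily (K := K) L
            fun i ↦ (⟨b i, hmem i⟩ : span K (Set.range b))).range := by
      rw [← range_evalFamily_coe]
    _ = finrank L (span K (Set.range b) →ₗ[K] L) :=
      LinearMap.finrank_range_of_inj (evalFamily_injective L hspan)
    _ = finrank K (span K (Set.range b)) := finrank_linearMap_self K L _

end Evaluation

section Galois

variable {ι : Type*} (K L : Type*) [Field K] [Field L] [Algebra K L] [FiniteDimensional K L]
  [IsGalois K L]

theorem span_range_algEquiv_toLinearMap :
    span L (Set.range fun σ : Gal(L/K) ↦ σ.toLinearMap) = ⊤ := by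
  have hli : LinearIndependent L fun σ : Gal(L/K) ↦ σ.toLinearMap :=
    (linearIndependent_algHom_toLinearMap K L L).comp (fun σ : Gal(L/K) ↦ (σ : L →ₐ[K] L))
      AlgEquiv.coe_algHom_injective
  refine hli.span_eq_top_of_card_eq_finrank' ?_
  calc
    Fintype.card Gal(L/K) = Nat.card Gal(L/K) := Fintype.card_eq_nat_card
    _ = finrank K L := IsGalois.card_aut_eq_finrank K L
    _ = finrank L (L →ₗ[K] L) := (finrank_linearMap_self K L L).symm

variable {L}

theorem span_range_conjugates (b : ι → L) :
    span L (Set.range fun (σ : Gal(L/K)) i ↦ σ (b i)) = (evalFamily (K := K) L b).range := by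
  rw [LinearMap.range_eq_map, ← span_range_algEquiv_toLinearMap, map_span, ← Set.range_comp]
  rfl

theorem stmt4_general (b : ι → L) :
    finrank L (span L (Set.range fun (σ : Gal(L/K)) i ↦ σ (b i))) = rankWeight K b := by
  rw [span_range_conjugates, finrank_range_evalFamily, rankWeight]

end Galois

section Frobenius

variable {L : Type*} [Field L]

theorem qStar_span_singleton (q m : ℕ) {n : ℕ} (b : Fin n → L) :
    qStar q m (span L {b}) = span L (Set.range fun (k : Fin m) i ↦ b i ^ q ^ (k : ℕ)) := by
  apply le_antisymm
  · refine iSup₂_le fun k hk ↦ span_le.2 ?_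
    rintro _ ⟨v, hv, rfl⟩
    obtain ⟨c, rfl⟩ := mem_span_singleton.1 hv
    have hpow : (fun i ↦ (c • b) i ^ q ^ k) = c ^ q ^ k • fun i ↦ b i ^ q ^ k :=
      funext fun i ↦ mul_pow c (b i) _
    beta_reduce
    rw [hpow]
    exact smul_mem _ _ (subset_span ⟨⟨k, Finset.mem_range.1 hk⟩, rfl⟩)
  · rw [span_le]
    rintro _ ⟨k, rfl⟩
    exact mem_iSup_of_mem (k : ℕ) (mem_iSup_of_mem (Finset.mem_range.2 k.2)
      (subset_span ⟨b, mem_span_singleton_self b, rfl⟩))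

theorem range_frobenius_pow_eq_range_conjugates {ι : Type*} (K : Type*) [Field K] [Fintype K]
    [Finite L] [Algebra K L] (b : ι → L) :
    (Set.range fun (k : Fin (finrank K L)) i ↦ b i ^ Fintype.card K ^ (k : ℕ)) =
      Set.range fun (σ : Gal(L/K)) i ↦ σ (b i) := by
  rw [← (FiniteField.bijective_frobeniusAlgEquivOfAlgebraic_pow K L).surjective.range_comp]
  simp only [Function.comp_def, AlgEquiv.coe_pow,
    FiniteField.coe_frobeniusAlgEquivOfAlgebraic_iterate]

end Frobenius

/-- For a nonzero vector `b ∈ F_{q^m}^n`,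
`dim ⟨b⟩* = d_R(b,0)`: the `F_{q^m}`-dimension of `⟨b⟩* = Σ_{i=0}^{m-1} ⟨b⟩^{q^i}`
equals the rank weight of `b`. -/
theorem stmt4 (m n : ℕ) [Fintype Fq] [Fintype Fqm]
    (hq : Fintype.card Fq = q) (hm : Module.finrank Fq Fqm = m)
    (b : Fin n → Fqm) (hb : b ≠ 0) :
    Module.finrank Fqm ↥(qStar q m (Submodule.span Fqm {b})) = rankWeight Fq b := by
  subst hq hm
  rw [qStar_span_singleton, range_frobenius_pow_eq_range_conjugates, stmt4_general]

end
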